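/- arXiv:2406.09118 — 5 statements merged into one kernel-verified Lean document; each statement's English description precedes it below -/
import Mathlib

section
/- Let D ⊂ ℝ^d be open and bounded, let f : ℝ^d → ℝ be continuously differentiable, and let V : ℝ^d → ℝ^d be a continuously differentiable vector field whose support is a compact subset of D. For t ≥ 0 set F_t(x) := x + t·V(x). Then for every r ≥ 0 the map t ↦ f ∘ F_t is differentiable at r in the L¹(D)-sense, i.e. lim_{t→0} ∫_D | (f(F_{r+t}(x)) − f(F_r(x)))/t − ∇f(F_r(x))·V(x) | dx = 0. -/
/-!
Dominated convergence on `D`, which has finite measure. For fixed `x`, the chain rule gives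
`d/ds f (x + s • V x) = fderiv ℝ f (x + s • V x) (V x)`, so the integrand tends to `0` pointwise.
This derivative is jointly continuous in `(s, x)`, hence bounded by some `C` on the compact set
`[r - 1, r + 1] × closure D`; by the mean value inequality the difference quotients with `|t| < 1`
are also bounded by `C`, and the constant `C + C` dominates the integrand.
-/

open MeasureTheory Filter Topology

/-- L¹-differentiability of `t ↦ f ∘ F_t` for the perturbation of identity
`F_t(x) = x + t • V x`, where `f` is `C¹` and `V` is a `C¹` vector field with compact support
contained in the open bounded set `D`. -/
theorem stmt_0 (d : ℕ) (D : Set (EuclideanSpace ℝ (Fin d)))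
    (hD : IsOpen D) (hDb : Bornology.IsBounded D)
    (f : EuclideanSpace ℝ (Fin d) → ℝ) (hf : ContDiff ℝ 1 f)
    (V : EuclideanSpace ℝ (Fin d) → EuclideanSpace ℝ (Fin d)) (hV : ContDiff ℝ 1 V)
    (hVcomp : IsCompact (tsupport V)) (hVsub : tsupport V ⊆ D) :
    ∀ r : ℝ, 0 ≤ r →
      Tendsto
        (fun t : ℝ => ∫ x in D,
          |(f (x + (r + t) • V x) - f (x + r • V x)) / t - fderiv ℝ f (x + r • V x) (V x)|)
        (𝓝[≠] 0) (𝓝 0) := by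
  intro r _
  have hline : ∀ x s, HasDerivAt (fun s : ℝ => f (x + s • V x))
      (fderiv ℝ f (x + s • V x) (V x)) s := by
    intro x s
    have h1 : HasDerivAt (fun s : ℝ => x + s • V x) (V x) s := by
      simpa using ((hasDerivAt_id s).smul_const (V x)).const_add x
    exact ((hf.differentiable one_ne_zero) _).hasFDerivAt.comp_hasDerivAt s h1
  have hVc : Continuous V := hV.continuous
  have hfc : Continuous f := hf.continuous
  have hf' : Continuous (fderiv ℝ f) := hf.continuous_fderiv one_ne_zero
  have hG : Continuous (fun p : ℝ × EuclideanSpace ℝ (Fin d) =>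
      fderiv ℝ f (p.2 + p.1 • V p.2) (V p.2)) := by
    fun_prop
  -- `D` is relatively compact, so the directional derivative is bounded for `s` near `r`.
  obtain ⟨C, hC⟩ := ((isCompact_Icc (a := r - 1) (b := r + 1)).prod
    hDb.isCompact_closure).exists_bound_of_continuousOn hG.continuousOn
  have hC' : ∀ x ∈ D, ∀ s ∈ Set.Icc (r - 1) (r + 1),
      ‖fderiv ℝ f (x + s • V x) (V x)‖ ≤ C := fun x hx s hs =>
    hC (s, x) ⟨hs, subset_closure hx⟩
  have hfin : IsFiniteMeasure (volume.restrict D) :=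
    isFiniteMeasure_restrict.2 hDb.measure_lt_top.ne
  have key : Tendsto
        (fun t : ℝ => ∫ x in D,
          |(f (x + (r + t) • V x) - f (x + r • V x)) / t - fderiv ℝ f (x + r • V x) (V x)|)
        (𝓝[≠] 0) (𝓝 (∫ _ in D, (0 : ℝ))) := by
    refine tendsto_integral_filter_of_dominated_convergence (fun _ => C + C) ?_ ?_
      (integrable_const _) ?_
    · refine Eventually.of_forall fun t => Continuous.aestronglyMeasurable ?_
      have := hG.comp (Continuous.prodMk_right r)
      simp only [Function.comp_def] at this
      fun_prop
    · have hnear : ∀ᶠ t : ℝ in 𝓝[≠] 0, t ∈ Set.Ioo (-1 : ℝ) 1 :=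
        nhdsWithin_le_nhds (Ioo_mem_nhds (by norm_num) (by norm_num))
      filter_upwards [hnear, self_mem_nhdsWithin] with t ht ht0
      filter_upwards [ae_restrict_mem hD.measurableSet] with x hx
      have hmvt := (convex_Icc (r - 1) (r + 1)).norm_image_sub_le_of_norm_hasDerivWithin_le
        (fun s _ => (hline x s).hasDerivWithinAt) (hC' x hx)
        (show r ∈ Set.Icc (r - 1) (r + 1) by constructor <;> linarith)
        (show r + t ∈ Set.Icc (r - 1) (r + 1) by constructor <;> linarith [ht.1, ht.2])
      rw [add_sub_cancel_left] at hmvt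
      have hq : ‖(f (x + (r + t) • V x) - f (x + r • V x)) / t‖ ≤ C := by
        rw [norm_div]
        exact (div_le_iff₀ (norm_pos_iff.2 ht0)).2 hmvt
      rw [← Real.norm_eq_abs, norm_norm]
      exact (norm_sub_le _ _).trans (add_le_add hq
        (hC' x hx r (by constructor <;> linarith)))
    · refine Eventually.of_forall fun x => ?_
      have h := (hasDerivAt_iff_tendsto_slope_zero.1 (hline x r)).sub_const
        (fderiv ℝ f (x + r • V x) (V x))
      rw [sub_self] at h
      simpa [div_eq_inv_mul] using h.abs
  simpa using key
end

section
/- Let Ω and I be disjoint measurable subsets of ℝ^d, let γ : ℝ^d × ℝ^d → [0,∞) be measurable, and let u, v : Ω ∪ I → ℝ be measurable functions with v = 0 on I. Assume that the functions (x,y) ↦ v(x)(u(x)γ(x,y) − u(y)γ(y,x)) and (x,y) ↦ (v(x) − v(y))(u(x)γ(x,y) − u(y)γ(y,x)) are integrable over (Ω ∪ I) × (Ω ∪ I). Then ∫_Ω ∫_{Ω∪I} v(x)(u(x)γ(x,y) − u(y)γ(y,x)) dy dx = (1/2) ∫_{Ω∪I} ∫_{Ω∪I} (v(x) − v(y))(u(x)γ(x,y)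 − u(y)γ(y,x)) dy dx. -/
/-!
Write `F (x, y) = v x * (u x * γ x y - u y * γ y x)`. Since `v` vanishes on `I`, the outer integral
over `Ω` may be taken over `Ω ∪ I`. The factor `u x * γ x y - u y * γ y x` changes sign when `x` and
`y` are exchanged, so the integrand on the right is `F (x, y) + F (y, x)`; by Fubini and the
invariance of the product measure under the swap, both terms have the same integral.
-/

open MeasureTheory Filter Topology

/-- Symmetrized (Fubini) reformulation of the nonlocal bilinear pairing:
for disjoint measurable `Ω`, `I`, a nonnegative measurable kernel `γ`, and measurable `u`, `v`
with `v = 0` on `I`, assuming integrability of both integrands over `(Ω ∪ I) × (Ω ∪ I)`,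
`∫_Ω ∫_{Ω∪I} v(x)(u(x)γ(x,y) − u(y)γ(y,x)) dy dx
  = (1/2) ∫_{Ω∪I} ∫_{Ω∪I} (v(x) − v(y))(u(x)γ(x,y) − u(y)γ(y,x)) dy dx`. -/
theorem stmt_5 (d : ℕ) (Ω I : Set (EuclideanSpace ℝ (Fin d)))
    (hΩ : MeasurableSet Ω) (hI : MeasurableSet I) (hdisj : Disjoint Ω I)
    (γ : EuclideanSpace ℝ (Fin d) → EuclideanSpace ℝ (Fin d) → ℝ)
    (hγ0 : ∀ x y, 0 ≤ γ x y)
    (hγm : Measurable (fun p : EuclideanSpace ℝ (Fin d) × EuclideanSpace ℝ (Fin d) =>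
      γ p.1 p.2))
    (u v : EuclideanSpace ℝ (Fin d) → ℝ) (hu : Measurable u) (hv : Measurable v)
    (hvI : ∀ x ∈ I, v x = 0)
    (hint1 : IntegrableOn
      (fun p : EuclideanSpace ℝ (Fin d) × EuclideanSpace ℝ (Fin d) =>
        v p.1 * (u p.1 * γ p.1 p.2 - u p.2 * γ p.2 p.1)) ((Ω ∪ I) ×ˢ (Ω ∪ I)))
    (hint2 : IntegrableOn
      (fun p : EuclideanSpace ℝ (Fin d) × EuclideanSpace ℝ (Fin d) =>
        (v p.1 - v p.2) * (u p.1 * γ p.1 p.2 - u p.2 * γ p.2 p.1)) ((Ω ∪ I) ×ˢ (Ω ∪ I))) :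
    ∫ x in Ω, ∫ y in Ω ∪ I, v x * (u x * γ x y - u y * γ y x)
      = (1/2 : ℝ) * ∫ x in Ω ∪ I, ∫ y in Ω ∪ I, (v x - v y) * (u x * γ x y - u y * γ y x) := by
  have hsub : ∫ x in Ω, ∫ y in Ω ∪ I, v x * (u x * γ x y - u y * γ y x)
      = ∫ x in Ω ∪ I, ∫ y in Ω ∪ I, v x * (u x * γ x y - u y * γ y x) := by
    refine (setIntegral_eq_of_subset_of_forall_sdiff_eq_zero (hΩ.union hI)
      Set.subset_union_left ?_).symm
    rintro x ⟨hx | hx, hx'⟩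
    · exact absurd hx hx'
    · simp [hvI x hx]
  rw [hsub]
  rw [IntegrableOn, Measure.volume_eq_prod, ← Measure.prod_restrict] at hint1 hint2
  rw [← integral_prod _ hint1, ← integral_prod _ hint2]
  have hswap := integral_prod_swap (μ := volume.restrict (Ω ∪ I)) (ν := volume.restrict (Ω ∪ I))
    (fun p : EuclideanSpace ℝ (Fin d) × EuclideanSpace ℝ (Fin d) =>
        v p.1 * (u p.1 * γ p.1 p.2 - u p.2 * γ p.2 p.1))
  have hadd := integral_add hint1 hint1.swap
  -- The flux is antisymmetric, so the symmetrized integrand is `F + F ∘ swap`.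
  have hsymm : ∀ p : EuclideanSpace ℝ (Fin d) × EuclideanSpace ℝ (Fin d),
      (v p.1 - v p.2) * (u p.1 * γ p.1 p.2 - u p.2 * γ p.2 p.1)
        = v p.1 * (u p.1 * γ p.1 p.2 - u p.2 * γ p.2 p.1)
          + v p.2 * (u p.2 * γ p.2 p.1 - u p.1 * γ p.1 p.2) := fun p => by ring
  simp only [hsymm]
  simp only [Function.comp_apply, Prod.fst_swap, Prod.snd_swap] at hadd hswap
  rw [hadd, hswap]
  ring
end

section
/- Let d ∈ ℕ, s ∈ (0,1), and p := d + 2s. Let σ : ℝ^d × ℝ^d → [0,∞) be continuously differentiable with σ and its gradient bounded, and let V : ℝ^d → ℝ^d be bounded and Lipschitz continuous. Define γ(x,y) := σ(x,y)/‖x−y‖₂^p for x ≠ y. Then there exists a constant C > 0 such that for all x ≠ y: | ∇_x γ(x,y)·V(x) + ∇_y γ(x,y)·V(y) | · ‖x − y‖₂^{p} ≤ C. -/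
/-!
The product rule splits the derivative of `γ = σ · N(x - y)`, `N z = ‖z‖ ^ (-p)`, along
`(V x, V y)` into `Dσ(V x, V y) · N(x - y)` and `σ · DN(x - y)(V x - V y)`: since `N` depends on
`x - y` only, the two partial derivatives of the singular factor have opposite signs. As
`‖DN z‖ ≤ p ‖z‖ ^ (-p - 1)`, the Lipschitz bound on `V x - V y` absorbs the additional power of
`‖x - y‖`, so after multiplication by `‖x - y‖ ^ p` the two terms are at most `M * MV` and
`M * p * K`.
-/

open MeasureTheory Filter Topology

/-- `z ↦ ‖z‖ ^ (-p)` is differentiable off the origin, with derivative of size at most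
`p ‖z‖ ^ (-p - 1)`. -/
lemma exists_hasFDerivAt_norm_rpow_neg {E : Type*} [NormedAddCommGroup E]
    [InnerProductSpace ℝ E] {p : ℝ} (hp : 0 ≤ p) {z : E} (hz : z ≠ 0) :
    ∃ L : E →L[ℝ] ℝ, HasFDerivAt (fun z' : E => ‖z'‖ ^ (-p)) L z ∧
      ∀ u, |L u| ≤ p * ‖z‖ ^ (-p - 1) * ‖u‖ := by
  have hd : DifferentiableAt ℝ (fun z' : E => ‖z'‖) z :=
    (contDiffAt_norm ℝ hz (n := 1)).differentiableAt (by norm_num)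
  refine ⟨_, hd.hasFDerivAt.rpow_const (p := -p) (Or.inl (norm_ne_zero_iff.2 hz)), fun u => ?_⟩
  have h1 : |fderiv ℝ (fun z' : E => ‖z'‖) z u| ≤ ‖u‖ := by
    have hlip : ‖fderiv ℝ (fun z' : E => ‖z'‖) z‖ ≤ (1 : NNReal) :=
      norm_fderiv_le_of_lipschitz ℝ lipschitzWith_one_norm
    simpa using (fderiv ℝ (fun z' : E => ‖z'‖) z).le_of_opNorm_le hlip u
  have h2 : 0 ≤ p * ‖z‖ ^ (-p - 1) := by positivity
  rw [ContinuousLinearMap.smul_apply, smul_eq_mul, abs_mul, neg_mul, abs_neg, abs_of_nonneg h2]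
  gcongr

/-- First-order kernel estimate: for `γ(x,y) = σ(x,y)/‖x−y‖^{d+2s}` with
`σ ≥ 0` of class `C¹` with `σ` and `∇σ` bounded, and `V` bounded and Lipschitz, there is
`C > 0` with `|∇_x γ(x,y)·V(x) + ∇_y γ(x,y)·V(y)| · ‖x−y‖^{d+2s} ≤ C` for all `x ≠ y`. -/
theorem stmt_8 (d : ℕ) (s : ℝ) (hs : s ∈ Set.Ioo (0:ℝ) 1)
    (σ : EuclideanSpace ℝ (Fin d) × EuclideanSpace ℝ (Fin d) → ℝ)
    (hσ0 : ∀ q, 0 ≤ σ q) (hσ : ContDiff ℝ 1 σ)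
    (M : ℝ) (hσb : ∀ q, |σ q| ≤ M) (hσd : ∀ q, ‖fderiv ℝ σ q‖ ≤ M)
    (V : EuclideanSpace ℝ (Fin d) → EuclideanSpace ℝ (Fin d))
    (MV : ℝ) (hVb : ∀ x, ‖V x‖ ≤ MV) (K : NNReal) (hVL : LipschitzWith K V) :
    ∃ C : ℝ, 0 < C ∧ ∀ x y : EuclideanSpace ℝ (Fin d), x ≠ y →
      |fderiv ℝ (fun x' => σ (x', y) / ‖x' - y‖ ^ ((d:ℝ) + 2*s)) x (V x)
          + fderiv ℝ (fun y' => σ (x, y') / ‖x - y'‖ ^ ((d:ℝ) + 2*s)) y (V y)|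
        * ‖x - y‖ ^ ((d:ℝ) + 2*s) ≤ C := by
  set p : ℝ := (d:ℝ) + 2*s with hpdef
  have hp : 0 ≤ p := by have := hs.1; positivity
  have hM : 0 ≤ M := (abs_nonneg _).trans (hσb 0)
  have hMV : 0 ≤ MV := (norm_nonneg _).trans (hVb 0)
  refine ⟨M * MV + M * (p * K) + 1, by positivity, fun x y hxy => ?_⟩
  have hz : x - y ≠ 0 := sub_ne_zero.2 hxy
  have hr : 0 < ‖x - y‖ := norm_pos_iff.2 hz
  obtain ⟨L, hL, hLb⟩ := exists_hasFDerivAt_norm_rpow_neg hp hz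
  have hD : HasFDerivAt σ (fderiv ℝ σ (x, y)) (x, y) :=
    (hσ.differentiable (by norm_num) _).hasFDerivAt
  have hx := (hD.comp x (hasFDerivAt_prodMk_left x y)).mul
    (hL.comp x ((hasFDerivAt_id x).sub_const y))
  have hy := (hD.comp y (hasFDerivAt_prodMk_right x y)).mul
    (hL.comp y ((hasFDerivAt_id y).const_sub x))
  have ex : (fun x' => σ (x', y) / ‖x' - y‖ ^ p) =
      fun x' => σ (x', y) * ‖x' - y‖ ^ (-p) := by
    funext x'; rw [Real.rpow_neg (norm_nonneg _), div_eq_mul_inv]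
  have ey : (fun y' => σ (x, y') / ‖x - y'‖ ^ p) =
      fun y' => σ (x, y') * ‖x - y'‖ ^ (-p) := by
    funext y'; rw [Real.rpow_neg (norm_nonneg _), div_eq_mul_inv]
  have fx : fderiv ℝ (fun x' => σ (x', y) / ‖x' - y‖ ^ p) x (V x) =
      σ (x, y) * L (V x) + ‖x - y‖ ^ (-p) * fderiv ℝ σ (x, y) (V x, 0) := by
    rw [ex]; erw [hx.fderiv]; simp
  have fy : fderiv ℝ (fun y' => σ (x, y') / ‖x - y'‖ ^ p) y (V y) =
      -(σ (x, y) * L (V y)) + ‖x - y‖ ^ (-p) * fderiv ℝ σ (x, y) (0, V y) := by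
    rw [ey]; erw [hy.fderiv]; simp
  have hsum : fderiv ℝ (fun x' => σ (x', y) / ‖x' - y‖ ^ p) x (V x)
      + fderiv ℝ (fun y' => σ (x, y') / ‖x - y'‖ ^ p) y (V y) =
      ‖x - y‖ ^ (-p) * fderiv ℝ σ (x, y) (V x, V y) + σ (x, y) * L (V x - V y) := by
    have hsplit : ((V x, V y) : EuclideanSpace ℝ (Fin d) × EuclideanSpace ℝ (Fin d)) =
        (V x, 0) + (0, V y) := by simp
    rw [fx, fy, hsplit, map_add, map_sub]; ring
  have hA : |fderiv ℝ σ (x, y) (V x, V y)| ≤ M * MV := by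
    refine ((fderiv ℝ σ (x, y)).le_of_opNorm_le (hσd _) _).trans ?_
    gcongr
    exact max_le (hVb x) (hVb y)
  have hpow : ‖x - y‖ ^ (-p - 1) * ‖x - y‖ = ‖x - y‖ ^ (-p) := by
    rw [← Real.rpow_add_one hr.ne']; congr 1; ring
  have hB : |L (V x - V y)| ≤ p * K * ‖x - y‖ ^ (-p) :=
    calc |L (V x - V y)| ≤ p * ‖x - y‖ ^ (-p - 1) * ‖V x - V y‖ := hLb _
      _ ≤ p * ‖x - y‖ ^ (-p - 1) * (K * ‖x - y‖) := by
        gcongr; exact hVL.norm_sub_le x y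
      _ = p * K * ‖x - y‖ ^ (-p) := by rw [← hpow]; ring
  have hinv : ‖x - y‖ ^ (-p) * ‖x - y‖ ^ p = 1 := by
    rw [← Real.rpow_add hr]; simp
  rw [hsum]
  calc _ ≤ (‖x - y‖ ^ (-p) * (M * MV) + M * (p * K * ‖x - y‖ ^ (-p))) * ‖x - y‖ ^ p := by
        gcongr
        refine (abs_add_le _ _).trans ?_
        rw [abs_mul, abs_mul, abs_of_nonneg (Real.rpow_nonneg hr.le (-p))]
        gcongr
        exact hσb _
    _ = (M * MV + M * (p * K)) * (‖x - y‖ ^ (-p) * ‖x - y‖ ^ p) := by ring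
    _ ≤ _ := by rw [hinv]; linarith
end

section
/- Let d ∈ ℕ, s ∈ (0,1), and p := d + 2s. Let σ : ℝ^d × ℝ^d → [0,∞) be twice continuously differentiable with σ and all its first and second partial derivatives bounded, and let V, W : ℝ^d → ℝ^d be bounded Lipschitz continuous vector fields. Define γ(x,y) := σ(x,y)/‖x−y‖₂^p for x ≠ y. Then there exists a constant C > 0 such that for all x ≠ y: | D²γ(x,y)[(V(x),V(y)),(W(x),W(y))] | · ‖x − y‖₂^{p} ≤ C, where D²γ(x,y)[·,·] denotes the second derivative of γ at (x,y) viewed as a bilinear form on ℝ^d × ℝ^d. -/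
/-!
Write `p = d + 2s`, `N q = ‖q.1 - q.2‖²`, `a = -p/2`, so that `γ = σ · N ^ a` off the diagonal. With
`z = x - y`, `v' = v.1 - v.2`, `w' = w.1 - w.2`, two applications of the product rule give
`D²γ[v, w] = σ (4a(a-1) N^(a-2) ⟪z,v'⟫⟪z,w'⟫ + 2a N^(a-1) ⟪v',w'⟫)`
`  + 2a N^(a-1) (⟪z,w'⟫ Dσ[v] + ⟪z,v'⟫ Dσ[w]) + N^a D²σ[v,w]`
(`fderiv_fderiv_kernel`). For `v = (V x, V y)` and `w = (W x, W y)`, Lipschitz continuity gives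
`‖v'‖, ‖w'‖ ≤ K ‖z‖`, so each inner product is `O(N)` and absorbs one of the surplus factors
`N⁻¹`; hence every term is `O(N^a) = O(‖z‖^(-p))`.
-/

open MeasureTheory Filter Topology

lemma div_norm_rpow_eq {E : Type*} [NormedAddCommGroup E] (t p : ℝ) (z : E) :
    t / ‖z‖ ^ p = t * (‖z‖ ^ 2) ^ (-p / 2) := by
  rw [div_eq_mul_inv, ← Real.rpow_neg (norm_nonneg _), ← Real.rpow_natCast,
    ← Real.rpow_mul (norm_nonneg _)]
  congr 2
  push_cast
  ring

section Kernel

variable {E : Type*} [NormedAddCommGroup E] [InnerProductSpace ℝ E]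

/-- The first derivative of `q ↦ ‖q.1 - q.2‖²`, as a continuous linear form. -/
noncomputable def sqDistDeriv (q : E × E) : E × E →L[ℝ] ℝ :=
  (2 : ℝ) • (innerSL ℝ (q.1 - q.2)).comp
    (ContinuousLinearMap.fst ℝ E E - ContinuousLinearMap.snd ℝ E E)

lemma sqDistDeriv_apply (q v : E × E) :
    sqDistDeriv q v = 2 * inner ℝ (q.1 - q.2) (v.1 - v.2) := by
  simp [sqDistDeriv, inner_sub_left, inner_sub_right]

/-- `(q, w) ↦ D N(q)[w]` is a symmetric bilinear form, because `N` is a quadratic form. -/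
lemma sqDistDeriv_comm (q w : E × E) : sqDistDeriv q w = sqDistDeriv w q := by
  rw [sqDistDeriv_apply, sqDistDeriv_apply, real_inner_comm]

lemma hasFDerivAt_sqDist (q : E × E) :
    HasFDerivAt (fun q : E × E => ‖q.1 - q.2‖ ^ 2) (sqDistDeriv q) q := by
  have h : HasFDerivAt (fun q : E × E => q.1 - q.2)
      (ContinuousLinearMap.fst ℝ E E - ContinuousLinearMap.snd ℝ E E) q :=
    hasFDerivAt_fst.sub hasFDerivAt_snd
  have h2 := h.norm_sq
  rwa [← Nat.cast_smul_eq_nsmul ℝ, Nat.cast_ofNat] at h2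

lemma hasFDerivAt_sqDist_rpow (a : ℝ) {q : E × E} (hq : q.1 ≠ q.2) :
    HasFDerivAt (fun q : E × E => (‖q.1 - q.2‖ ^ 2) ^ a)
      ((a * (‖q.1 - q.2‖ ^ 2) ^ (a - 1)) • sqDistDeriv q) q := by
  have hpos : ‖q.1 - q.2‖ ^ 2 ≠ 0 := by
    simpa [sub_eq_zero] using hq
  exact (hasFDerivAt_sqDist q).rpow_const (Or.inl hpos)

lemma fderiv_kernel {σ : E × E → ℝ} (hσ : ContDiff ℝ 2 σ) (a : ℝ) {q : E × E}
    (hq : q.1 ≠ q.2) (w : E × E) :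
    fderiv ℝ (fun q : E × E => σ q * (‖q.1 - q.2‖ ^ 2) ^ a) q w =
      σ q * ((a * (‖q.1 - q.2‖ ^ 2) ^ (a - 1)) * sqDistDeriv q w)
        + (‖q.1 - q.2‖ ^ 2) ^ a * fderiv ℝ σ q w := by
  have h1 : HasFDerivAt σ (fderiv ℝ σ q) q :=
    ((hσ.differentiable (by norm_num)) q).hasFDerivAt
  have h := (h1.mul (hasFDerivAt_sqDist_rpow a hq)).fderiv
  simp only [Pi.mul_def] at h
  rw [h]
  simp

/-- The Hessian of `σ · (‖x - y‖²)^a` off the diagonal. -/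
lemma fderiv_fderiv_kernel {σ : E × E → ℝ} (hσ : ContDiff ℝ 2 σ) (a : ℝ) {q : E × E}
    (hq : q.1 ≠ q.2) (v w : E × E) :
    fderiv ℝ (fderiv ℝ (fun q : E × E => σ q * (‖q.1 - q.2‖ ^ 2) ^ a)) q v w =
      σ q * (a * (a - 1) * (‖q.1 - q.2‖ ^ 2) ^ (a - 1 - 1) * sqDistDeriv q v * sqDistDeriv q w
          + a * (‖q.1 - q.2‖ ^ 2) ^ (a - 1) * (2 * inner ℝ (v.1 - v.2) (w.1 - w.2)))
        + a * (‖q.1 - q.2‖ ^ 2) ^ (a - 1) *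
          (sqDistDeriv q w * fderiv ℝ σ q v + sqDistDeriv q v * fderiv ℝ σ q w)
        + (‖q.1 - q.2‖ ^ 2) ^ a * fderiv ℝ (fderiv ℝ σ) q v w := by
  have hpos : ‖q.1 - q.2‖ ^ 2 ≠ 0 := by
    simpa [sub_eq_zero] using hq
  have hγ : ContDiffAt ℝ 2 (fun q : E × E => σ q * (‖q.1 - q.2‖ ^ 2) ^ a) q := by
    refine hσ.contDiffAt.mul (ContDiffAt.rpow_const_of_ne ?_ hpos)
    exact ((contDiff_fst.sub contDiff_snd).norm_sq ℝ).contDiffAt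
  have hdiff : DifferentiableAt ℝ
      (fderiv ℝ (fun q : E × E => σ q * (‖q.1 - q.2‖ ^ 2) ^ a)) q :=
    (hγ.fderiv_right (m := 1) (by norm_num)).differentiableAt (by norm_num)
  -- Freezing `w` reduces the claim to the derivative of a scalar function of `q`.
  have hswap : fderiv ℝ (fderiv ℝ (fun q : E × E => σ q * (‖q.1 - q.2‖ ^ 2) ^ a)) q v w =
      fderiv ℝ (fun q' =>
        fderiv ℝ (fun q : E × E => σ q * (‖q.1 - q.2‖ ^ 2) ^ a) q' w) q v := by
    rw [(hdiff.hasFDerivAt.clm_apply (hasFDerivAt_const w q)).fderiv]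
    simp
  have hopen : ∀ᶠ q' : E × E in 𝓝 q, q'.1 ≠ q'.2 :=
    (isOpen_ne_fun continuous_fst continuous_snd).mem_nhds hq
  have heq : (fun q' => fderiv ℝ (fun q : E × E => σ q * (‖q.1 - q.2‖ ^ 2) ^ a) q' w) =ᶠ[𝓝 q]
      fun q => σ q * ((a * (‖q.1 - q.2‖ ^ 2) ^ (a - 1)) * sqDistDeriv q w)
        + (‖q.1 - q.2‖ ^ 2) ^ a * fderiv ℝ σ q w :=
    hopen.mono fun q' hq' => fderiv_kernel hσ a hq' w
  have h1 : HasFDerivAt σ (fderiv ℝ σ q) q :=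
    ((hσ.differentiable (by norm_num)) q).hasFDerivAt
  have h2 : HasFDerivAt (fderiv ℝ σ) (fderiv ℝ (fderiv ℝ σ) q) q :=
    ((hσ.fderiv_right (m := 1) (by norm_num)).differentiable (by norm_num) q).hasFDerivAt
  have h3 : HasFDerivAt (fun q : E × E => sqDistDeriv q w) (sqDistDeriv w) q := by
    simp only [sqDistDeriv_comm _ w]
    exact (sqDistDeriv w).hasFDerivAt
  have h := (h1.mul (((hasFDerivAt_sqDist_rpow (a - 1) hq).const_mul a).mul h3)).add
    ((hasFDerivAt_sqDist_rpow a hq).mul (h2.clm_apply (hasFDerivAt_const w q)))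
  rw [hswap, heq.fderiv_eq]
  have h' := h.fderiv
  simp only [Pi.mul_def, Pi.add_def] at h'
  rw [h']
  have hwv : sqDistDeriv w v = 2 * inner ℝ (v.1 - v.2) (w.1 - w.2) := by
    rw [sqDistDeriv_comm, sqDistDeriv_apply]
  simp [hwv]
  ring

end Kernel

/-- Second-order kernel estimate: for `γ(x,y) = σ(x,y)/‖x−y‖^{d+2s}` with
`σ ≥ 0` of class `C²` with `σ` and its first and second derivatives bounded, and bounded
Lipschitz vector fields `V`, `W`, there is `C > 0` such that for all `x ≠ y` the second
derivative of `γ` at `(x,y)`, as a bilinear form on `ℝ^d × ℝ^d`, satisfies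
`|D²γ(x,y)[(V x, V y), (W x, W y)]| · ‖x−y‖^{d+2s} ≤ C`. -/
theorem stmt_9 (d : ℕ) (s : ℝ) (hs : s ∈ Set.Ioo (0:ℝ) 1)
    (σ : EuclideanSpace ℝ (Fin d) × EuclideanSpace ℝ (Fin d) → ℝ)
    (hσ0 : ∀ q, 0 ≤ σ q) (hσ : ContDiff ℝ 2 σ)
    (M : ℝ) (hσb : ∀ q, |σ q| ≤ M) (hσd1 : ∀ q, ‖fderiv ℝ σ q‖ ≤ M)
    (hσd2 : ∀ q, ‖fderiv ℝ (fderiv ℝ σ) q‖ ≤ M)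
    (V W : EuclideanSpace ℝ (Fin d) → EuclideanSpace ℝ (Fin d))
    (MV : ℝ) (hVb : ∀ x, ‖V x‖ ≤ MV) (hWb : ∀ x, ‖W x‖ ≤ MV)
    (K : NNReal) (hVL : LipschitzWith K V) (hWL : LipschitzWith K W) :
    ∃ C : ℝ, 0 < C ∧ ∀ x y : EuclideanSpace ℝ (Fin d), x ≠ y →
      |fderiv ℝ
          (fderiv ℝ (fun q : EuclideanSpace ℝ (Fin d) × EuclideanSpace ℝ (Fin d) =>
            σ q / ‖q.1 - q.2‖ ^ ((d:ℝ) + 2*s)))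
          (x, y) (V x, V y) (W x, W y)|
        * ‖x - y‖ ^ ((d:ℝ) + 2*s) ≤ C := by
  obtain ⟨p, hp⟩ : ∃ p : ℝ, p = (d : ℝ) + 2 * s := ⟨_, rfl⟩
  simp only [← hp, div_norm_rpow_eq]
  obtain ⟨a, ha⟩ : ∃ a : ℝ, a = -p / 2 := ⟨_, rfl⟩
  simp only [← ha]
  have hM : 0 ≤ M := (abs_nonneg _).trans (hσb 0)
  have hMV : 0 ≤ MV := (norm_nonneg _).trans (hVb 0)
  have hK : (0 : ℝ) ≤ K := K.2
  refine ⟨M * (|a * (a - 1)| * (2 * K) * (2 * K) + |a| * (2 * K ^ 2))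
    + |a| * ((2 * K) * (M * MV) + (2 * K) * (M * MV)) + M * MV * MV + 1, by positivity, ?_⟩
  intro x y hxy
  have hq : ((x, y) : EuclideanSpace ℝ (Fin d) × EuclideanSpace ℝ (Fin d)).1 ≠ (x, y).2 := hxy
  rw [fderiv_fderiv_kernel hσ a hq]
  obtain ⟨r, hr⟩ : ∃ r : ℝ, r = ‖x - y‖ := ⟨_, rfl⟩
  have hr0 : 0 < r := by rw [hr]; exact norm_pos_iff.2 (sub_ne_zero.2 hxy)
  have hv : ‖V x - V y‖ ≤ K * r := hr ▸ hVL.norm_sub_le x y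
  have hw : ‖W x - W y‖ ≤ K * r := hr ▸ hWL.norm_sub_le x y
  have hin : ∀ u u' : EuclideanSpace ℝ (Fin d), ‖u - u'‖ ≤ K * r →
      |sqDistDeriv (x, y) (u, u')| ≤ 2 * K * r ^ 2 := by
    intro u u' hu
    rw [sqDistDeriv_apply, abs_mul, abs_two]
    have h1 := abs_real_inner_le_norm (x - y) (u - u')
    have h2 : ‖x - y‖ * ‖u - u'‖ ≤ r * (K * r) := by rw [← hr]; gcongr
    dsimp only
    linarith
  have hV2 : ‖(V x, V y)‖ ≤ MV := max_le (hVb x) (hVb y)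
  have hW2 : ‖(W x, W y)‖ ≤ MV := max_le (hWb x) (hWb y)
  have hA := hin _ _ hv
  have hB := hin _ _ hw
  have hI : |inner ℝ (V x - V y) (W x - W y)| ≤ K ^ 2 * r ^ 2 := by
    refine (abs_real_inner_le_norm _ _).trans ?_
    calc ‖V x - V y‖ * ‖W x - W y‖ ≤ (K * r) * (K * r) := by gcongr
      _ = K ^ 2 * r ^ 2 := by ring
  have hS := hσb (x, y)
  have hSv : |fderiv ℝ σ (x, y) (V x, V y)| ≤ M * MV :=
    (fderiv ℝ σ (x, y)).le_of_opNorm_le_of_le (hσd1 _) hV2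
  have hSw : |fderiv ℝ σ (x, y) (W x, W y)| ≤ M * MV :=
    (fderiv ℝ σ (x, y)).le_of_opNorm_le_of_le (hσd1 _) hW2
  have hSS : |fderiv ℝ (fderiv ℝ σ) (x, y) (V x, V y) (W x, W y)| ≤ M * MV * MV :=
    (fderiv ℝ (fderiv ℝ σ) (x, y) (V x, V y)).le_of_opNorm_le_of_le
      ((fderiv ℝ (fderiv ℝ σ) (x, y)).le_of_opNorm_le_of_le (hσd2 _) hV2) hW2
  dsimp only
  rw [← hr]
  generalize sqDistDeriv (x, y) (V x, V y) = A at *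
  generalize sqDistDeriv (x, y) (W x, W y) = B at *
  generalize fderiv ℝ (fderiv ℝ σ) (x, y) (V x, V y) (W x, W y) = D at *
  generalize fderiv ℝ σ (x, y) (V x, V y) = Dv at *
  generalize fderiv ℝ σ (x, y) (W x, W y) = Dw at *
  generalize inner ℝ (V x - V y) (W x - W y) = I at *
  generalize σ (x, y) = S at *
  -- Normalise the inner products by `n = r²`; the powers of `n` then cancel exactly.
  obtain ⟨n, hn⟩ : ∃ n : ℝ, n = r ^ 2 := ⟨_, rfl⟩
  have hn0 : 0 < n := by rw [hn]; positivity
  have hrp : n ^ a * r ^ p = 1 := by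
    rw [hn, ← Real.rpow_natCast, ← Real.rpow_mul hr0.le, ← Real.rpow_add hr0, ha]
    norm_num
    ring_nf
    simp
  rw [← hn] at hA hB hI ⊢
  have e1 : n ^ (a - 1) = n ^ a / n := Real.rpow_sub_one hn0.ne' a
  have e2 : n ^ (a - 1 - 1) = n ^ a / n / n := by rw [Real.rpow_sub_one hn0.ne', e1]
  have hdiv : ∀ t c : ℝ, |t| ≤ c * n → |t / n| ≤ c := by
    intro t c h
    rw [abs_div, abs_of_pos hn0]
    exact (div_le_iff₀ hn0).2 h
  have hA' := hdiv _ _ hA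
  have hB' := hdiv _ _ hB
  have hI' := hdiv _ _ hI
  have hrp0 : 0 < r ^ p := Real.rpow_pos_of_pos hr0 p
  rw [e1, e2, ← abs_of_pos hrp0, ← abs_mul]
  have key : (S * (a * (a - 1) * (n ^ a / n / n) * A * B + a * (n ^ a / n) * (2 * I))
      + a * (n ^ a / n) * (B * Dv + A * Dw) + n ^ a * D) * r ^ p
      = S * (a * (a - 1) * (A / n) * (B / n) + a * (2 * (I / n)))
        + a * ((B / n) * Dv + (A / n) * Dw) + D := by
    linear_combination (S * (a * (a - 1) * (A / n) * (B / n) + a * (2 * (I / n)))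
        + a * ((B / n) * Dv + (A / n) * Dw) + D) * hrp
  rw [key]
  have t1 : |S * (a * (a - 1) * (A / n) * (B / n) + a * (2 * (I / n)))| ≤
      M * (|a * (a - 1)| * (2 * K) * (2 * K) + |a| * (2 * K ^ 2)) := by
    rw [abs_mul]
    gcongr
    refine (abs_add_le _ _).trans ?_
    rw [abs_mul, abs_mul _ (A / n), abs_mul a (2 * _), abs_mul 2, abs_two]
    gcongr
  have t2 : |a * ((B / n) * Dv + (A / n) * Dw)| ≤
      |a| * ((2 * K) * (M * MV) + (2 * K) * (M * MV)) := by
    rw [abs_mul]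
    gcongr
    refine (abs_add_le _ _).trans ?_
    rw [abs_mul, abs_mul]
    gcongr
  have t3 := abs_add_three (S * (a * (a - 1) * (A / n) * (B / n) + a * (2 * (I / n))))
    (a * ((B / n) * Dv + (A / n) * Dw)) D
  linarith
end

section
/- Let Ω ⊂ ℝ^d be open and bounded, let f : ℝ^d → ℝ be continuously differentiable, let W : ℝ^d → ℝ^d be a continuously differentiable vector field with compact support contained in Ω, and let v ∈ L¹(Ω). Define Φ(t) := ∫_Ω f(x + tW(x)) v(x) det( Id + t·DW(x) ) dx for t ≥ 0. Then Φ is differentiable at t = 0 from the right with Φ'(0) = ∫_Ω ( ∇f(x)·W(x) + f(x) div W(x) ) v(x) dx. -/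
open MeasureTheory Filter Topology

/-!
Differentiation under the integral sign. The integrand is `v x * G(t, x)` with
`G(t, x) = f (x + t W x) * det (Id + t DW x)`. Since the determinant is a smooth function on the
space of endomorphisms (`contDiff_det`), `G` is differentiable in `t`, with a `t`-derivative that
is jointly continuous in `(t, x)`, hence bounded by a constant `C` on the compact set
`[-1, 1] × closure Ω`. The integrable function `C * ‖v‖` then dominates the derivative of the
integrand. The derivative at `t = 0` is identified by the fact that the differential of the
determinant at the identity is the trace (`fderiv_det_id`).

The argument gives a two-sided derivative at `0`.
-/

/-- By the Leibniz formula, the determinant is polynomial in the matrix entries, which are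
continuous linear functions of the endomorphism. -/
lemma contDiff_det (d : ℕ) :
    ContDiff ℝ 1 (fun L : EuclideanSpace ℝ (Fin d) →L[ℝ] EuclideanSpace ℝ (Fin d) =>
      LinearMap.det L.toLinearMap) := by
  let b := (EuclideanSpace.basisFun (Fin d) ℝ).toBasis
  have h : (fun L : EuclideanSpace ℝ (Fin d) →L[ℝ] EuclideanSpace ℝ (Fin d) =>
      LinearMap.det L.toLinearMap) = fun L => ∑ σ : Equiv.Perm (Fin d),
        ((Equiv.Perm.sign σ : ℤ) : ℝ) * ∏ i, (L (b i)) (σ i) := by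
    funext L
    rw [← LinearMap.det_toMatrix b, Matrix.det_apply']
    simp [LinearMap.toMatrix_apply, b]
  rw [h]
  refine ContDiff.sum fun σ _ => contDiff_const.mul (contDiff_prod fun i _ => ?_)
  exact (EuclideanSpace.proj (𝕜 := ℝ) (σ i)).contDiff.comp
    (ContinuousLinearMap.apply ℝ (EuclideanSpace ℝ (Fin d)) (b i)).contDiff

lemma hasDerivAt_det (d : ℕ) (A : EuclideanSpace ℝ (Fin d) →L[ℝ] EuclideanSpace ℝ (Fin d))
    (t : ℝ) :
    HasDerivAt (fun t : ℝ => LinearMap.det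
      ((ContinuousLinearMap.id ℝ (EuclideanSpace ℝ (Fin d)) + t • A).toLinearMap))
      (fderiv ℝ (fun L : EuclideanSpace ℝ (Fin d) →L[ℝ] EuclideanSpace ℝ (Fin d) =>
        LinearMap.det L.toLinearMap) (ContinuousLinearMap.id ℝ _ + t • A) A) t := by
  have h1 : HasDerivAt (fun t : ℝ => ContinuousLinearMap.id ℝ (EuclideanSpace ℝ (Fin d)) + t • A)
      A t := by
    simpa using ((hasDerivAt_id t).smul_const A).const_add (ContinuousLinearMap.id ℝ _)
  have h2 := ((contDiff_det d).differentiable one_ne_zero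
    (ContinuousLinearMap.id ℝ _ + t • A)).hasFDerivAt
  exact h2.comp_hasDerivAt t h1

lemma id_add_zero_smul (d : ℕ)
    (A : EuclideanSpace ℝ (Fin d) →L[ℝ] EuclideanSpace ℝ (Fin d)) :
    ContinuousLinearMap.id ℝ (EuclideanSpace ℝ (Fin d)) + (0 : ℝ) • A
      = ContinuousLinearMap.id ℝ _ := by
  refine ContinuousLinearMap.ext fun y => ?_
  change y + (0 : ℝ) • A y = y
  rw [zero_smul, add_zero]

/-- The differential of the determinant at the identity is the trace: the coefficient of `t` in
`det (1 + t M)` is `trace M`. -/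
lemma fderiv_det_id (d : ℕ) (A : EuclideanSpace ℝ (Fin d) →L[ℝ] EuclideanSpace ℝ (Fin d)) :
    fderiv ℝ (fun L : EuclideanSpace ℝ (Fin d) →L[ℝ] EuclideanSpace ℝ (Fin d) =>
        LinearMap.det L.toLinearMap) (ContinuousLinearMap.id ℝ _) A
      = LinearMap.trace ℝ _ A.toLinearMap := by
  let b := (EuclideanSpace.basisFun (Fin d) ℝ).toBasis
  have h := hasDerivAt_det d A 0
  rw [id_add_zero_smul] at h
  refine h.unique ?_
  let M := LinearMap.toMatrix b b A.toLinearMap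
  let p := (1 + (Polynomial.X : Polynomial ℝ) • M.map Polynomial.C).det
  have hp : (fun t : ℝ => LinearMap.det
      ((ContinuousLinearMap.id ℝ (EuclideanSpace ℝ (Fin d)) + t • A).toLinearMap))
      = fun t => p.eval t := by
    funext t
    rw [← LinearMap.det_toMatrix b]
    simp only [p, ← Polynomial.coe_evalRingHom, RingHom.map_det]
    congr 1
    ext i j
    simp [M, Matrix.one_apply, LinearMap.toMatrix_apply, apply_ite, b]
    exact mul_comm _ _
  rw [hp, LinearMap.trace_eq_matrix_trace ℝ b, ← Matrix.derivative_det_one_add_X_smul]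
  exact p.hasDerivAt 0

/-- Shape derivative of the pulled-back forcing pairing: for
`Φ(t) = ∫_Ω f(x + tW(x)) v(x) det(Id + t·DW(x)) dx` with `f` of class `C¹`, `W` a `C¹`
vector field with compact support in the open bounded set `Ω` and `v ∈ L¹(Ω)`, the map
`Φ` is right-differentiable at `t = 0` with
`Φ'(0) = ∫_Ω (∇f(x)·W(x) + f(x) div W(x)) v(x) dx`. -/
theorem stmt_15 (d : ℕ) (Ω : Set (EuclideanSpace ℝ (Fin d)))
    (hΩo : IsOpen Ω) (hΩb : Bornology.IsBounded Ω)
    (f : EuclideanSpace ℝ (Fin d) → ℝ) (hf : ContDiff ℝ 1 f)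
    (W : EuclideanSpace ℝ (Fin d) → EuclideanSpace ℝ (Fin d)) (hW : ContDiff ℝ 1 W)
    (hWc : HasCompactSupport W) (hWs : tsupport W ⊆ Ω)
    (v : EuclideanSpace ℝ (Fin d) → ℝ) (hv : IntegrableOn v Ω) :
    HasDerivWithinAt
      (fun t : ℝ => ∫ x in Ω, f (x + t • W x) * v x *
        LinearMap.det
          ((ContinuousLinearMap.id ℝ (EuclideanSpace ℝ (Fin d))
            + t • fderiv ℝ W x).toLinearMap))
      (∫ x in Ω, (fderiv ℝ f x (W x)
        + f x * LinearMap.trace ℝ _ (fderiv ℝ W x).toLinearMap) * v x)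
      (Set.Ici 0) 0 := by
  set D := fun L : EuclideanSpace ℝ (Fin d) →L[ℝ] EuclideanSpace ℝ (Fin d) =>
    LinearMap.det L.toLinearMap with hD
  -- `G' (t, x)` is the derivative in `t` of `f (x + t W x) * det (Id + t DW x)`.
  let G' : ℝ × EuclideanSpace ℝ (Fin d) → ℝ := fun p =>
    fderiv ℝ f (p.2 + p.1 • W p.2) (W p.2)
        * D (ContinuousLinearMap.id ℝ _ + p.1 • fderiv ℝ W p.2)
      + f (p.2 + p.1 • W p.2)
        * fderiv ℝ D (ContinuousLinearMap.id ℝ _ + p.1 • fderiv ℝ W p.2) (fderiv ℝ W p.2)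
  have cf := hf.continuous
  have cf' := hf.continuous_fderiv one_ne_zero
  have cW := hW.continuous
  have cW' := hW.continuous_fderiv one_ne_zero
  have cD : Continuous D := (contDiff_det d).continuous
  have cD' : Continuous (fderiv ℝ D) := (contDiff_det d).continuous_fderiv one_ne_zero
  have hG' : Continuous G' := by
    have c1 : Continuous fun p : ℝ × EuclideanSpace ℝ (Fin d) => p.2 + p.1 • W p.2 := by fun_prop
    have c2 : Continuous fun p : ℝ × EuclideanSpace ℝ (Fin d) =>
        ContinuousLinearMap.id ℝ (EuclideanSpace ℝ (Fin d)) + p.1 • fderiv ℝ W p.2 := by fun_prop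
    exact (((cf'.comp c1).clm_apply (cW.comp continuous_snd)).mul (cD.comp c2)).add
      ((cf.comp c1).mul ((cD'.comp c2).clm_apply (cW'.comp continuous_snd)))
  obtain ⟨C, hC⟩ := ((isCompact_Icc (a := (-1 : ℝ)) (b := 1)).prod
    hΩb.isCompact_closure).exists_bound_of_continuousOn hG'.continuousOn
  have hmeas : ∀ t : ℝ, Continuous fun x => f (x + t • W x) *
      D (ContinuousLinearMap.id ℝ _ + t • fderiv ℝ W x) := by
    intro t
    exact (cf.comp (by fun_prop)).mul (cD.comp (by fun_prop))
  have key := hasDerivAt_integral_of_dominated_loc_of_deriv_le (𝕜 := ℝ)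
    (μ := volume.restrict Ω) (x₀ := (0 : ℝ)) (s := Set.Icc (-1) 1) (bound := fun x => C * ‖v x‖)
    (F := fun t x => f (x + t • W x) * v x *
      D (ContinuousLinearMap.id ℝ _ + t • fderiv ℝ W x))
    (F' := fun t x => G' (t, x) * v x)
    (Icc_mem_nhds (by norm_num) (by norm_num)) ?_ ?_ ?_ ?_ ?_ ?_
  · refine HasDerivAt.hasDerivWithinAt ?_
    convert key.2 using 3 with x
    simp only [G', zero_smul, add_zero, id_add_zero_smul]
    rw [hD, fderiv_det_id]
    simp
  · refine Eventually.of_forall fun t => ?_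
    refine ((hmeas t).aestronglyMeasurable.mul hv.aestronglyMeasurable).congr ?_
    exact Eventually.of_forall fun x => by simp only [Pi.mul_apply]; ring
  · -- At `t = 0` the integrand is `f v`, and `f` is bounded on the bounded set `Ω`.
    obtain ⟨K, hK⟩ := hΩb.isCompact_closure.exists_bound_of_continuousOn cf.continuousOn
    have : Integrable (fun x => f x * v x) (volume.restrict Ω) :=
      hv.bdd_mul cf.aestronglyMeasurable
        ((ae_restrict_iff' hΩo.measurableSet).2
          (Eventually.of_forall fun x hx => hK x (subset_closure hx)))
    simpa [hD] using this
  · exact (hG'.comp (by fun_prop : Continuous fun x : EuclideanSpace ℝ (Fin d) =>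
      ((0 : ℝ), x))).aestronglyMeasurable.mul hv.aestronglyMeasurable
  · refine (ae_restrict_iff' hΩo.measurableSet).2 (Eventually.of_forall fun x hx t ht => ?_)
    rw [norm_mul]
    exact mul_le_mul_of_nonneg_right (hC (t, x) ⟨ht, subset_closure hx⟩) (norm_nonneg _)
  · exact hv.norm.const_mul C
  · refine Eventually.of_forall fun x t _ => ?_
    have h1 : HasDerivAt (fun t : ℝ => x + t • W x) (W x) t := by
      simpa using ((hasDerivAt_id t).smul_const (W x)).const_add x
    have h2 := (hf.differentiable one_ne_zero (x + t • W x)).hasFDerivAt.comp_hasDerivAt t h1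
    refine ((h2.mul_const (v x)).mul (hasDerivAt_det d (fderiv ℝ W x) t)).congr_deriv ?_
    simp only [G', hD, Function.comp_apply]
    ring
end
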